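/- Let q be a prime power, let m > 1 be an integer, and let n = (q^m - 1)/(q - 1). Let {C_h}_{h=0}^{n} denote the weight distribution of the q-ary Hamming code H(m,q) (i.e., C_h is the number of codewords of Hamming weight h). Then for every h with 1 ≤ h ≤ n, h! · C_h = (-1)^h q^{m(h-1)} (q^m - 1) + Σ_{i=0}^{h-1} (-1)^{h+i+1} C_i Σ_{t=i}^{h} t! · S(h,t) · q^{h-t} (q-1)^{t-i} · binom(n-i, n-t), where S(h,t) is the Stirling number of the second kind. -/

import Mathlib

/-!
The identity is the `h`-th power moment identity of Pless for the dual (simplex) code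
`{x H : x ∈ F^m}`, solved for the term `i = h`.

With a primitive additive character `ψ` of `F`, the polynomial `q (1 + [y ≠ 0] X)` is
`∑_a g(a) ψ(a y)`, where `g(0) = q + (q - 1) X` and `g(a) = -X` for `a ≠ 0`. Multiplying over the
coordinates of `x H` and summing over `x` gives the MacWilliams identity
`q^n ∑_x (1 + X)^{wt(x H)} = q^m ∑_{H c = 0} (-X)^{wt c} (q + (q - 1) X)^{n - wt c}`
(`macWilliams_parityCheck`).

The columns of `H` represent every line of `F^m` (`sum_eq_zero_add_sum_columns`), so orthogonality
of characters forces every nonzero word of the simplex code to have weight `q^{m-1}`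
(`card_mul_hammingNorm_vecMul`). The left-hand side is therefore
`q^n (1 + (q^m - 1) (1 + X)^{q^{m-1}})`. Comparing coefficients of `X^t` yields the binomial moments
of the weight distribution (`binomial_moment`), and the Newton expansion
`N^h = ∑_t t! S(h,t) binom(N,t)` (`sum_stirlingS2_mul_choose`) turns these into the power moment.
-/


open Finset

/-- The Stirling number of the second kind, defined (as in the paper) by
`S(h,t) = (1/t!) ∑_{j=0}^{t} (-1)^{t-j} C(t,j) j^h`, viewed as a rational number. -/
noncomputable def stirlingS2 (h t : ℕ) : ℚ :=
  (t.factorial : ℚ)⁻¹ *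
    ∑ j ∈ Finset.range (t + 1), (-1 : ℚ) ^ (t - j) * (t.choose j : ℚ) * (j : ℚ) ^ h

/-- The weight distribution of the linear code over `F` with parity-check matrix `H`:
`hammingWeightCount H h` is the number of codewords of Hamming weight `h`. -/
noncomputable def hammingWeightCount {F : Type*} [Field F] [Fintype F] [DecidableEq F]
    {m n : ℕ} (H : Matrix (Fin m) (Fin n) F) (h : ℕ) : ℕ :=
  Nat.card {c : Fin n → F // H.mulVec c = 0 ∧ hammingNorm c = h}

section Helpers

open Polynomial

/-! ### Stirling numbers -/

/-- `t! S(h,t)` is the `t`-th forward difference of `x ↦ x^h` at `0`. -/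
lemma factorial_mul_stirlingS2 (h t : ℕ) :
    (t.factorial : ℚ) * stirlingS2 h t = (fwdDiff (1 : ℚ))^[t] (fun x : ℚ => x ^ h) 0 := by
  rw [stirlingS2, fwdDiff_iter_eq_sum_shift, ← mul_assoc,
    mul_inv_cancel₀ (by exact_mod_cast t.factorial_ne_zero), one_mul]
  refine Finset.sum_congr rfl fun j _ => ?_
  simp [zsmul_eq_mul]

lemma factorial_mul_stirlingS2_of_lt {h t : ℕ} (ht : h < t) :
    (t.factorial : ℚ) * stirlingS2 h t = 0 := by
  rw [factorial_mul_stirlingS2, fwdDiff_iter_pow_eq_zero_of_lt ht]; rfl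

lemma factorial_mul_stirlingS2_self (h : ℕ) :
    (h.factorial : ℚ) * stirlingS2 h h = h.factorial := by
  rw [factorial_mul_stirlingS2, fwdDiff_iter_eq_factorial]; rfl

lemma stirlingS2_zero_right {h : ℕ} (h1 : 1 ≤ h) : stirlingS2 h 0 = 0 := by
  simp [stirlingS2]; omega

/-- The Newton expansion of `x ↦ x^h` in the binomial basis. -/
lemma sum_stirlingS2_mul_choose (h N : ℕ) :
    ∑ t ∈ Finset.range (h + 1), (t.factorial : ℚ) * stirlingS2 h t * (N.choose t : ℚ)
      = (N : ℚ) ^ h := by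
  have key := shift_eq_sum_fwdDiff_iter (1 : ℚ) (fun x : ℚ => x ^ h) N 0
  simp only [← factorial_mul_stirlingS2, nsmul_eq_mul, mul_one, zero_add] at key
  rw [key]
  -- Both sums agree with the sum over `t ≤ h + N`: the added terms vanish.
  trans ∑ t ∈ Finset.range (h + N + 1), (t.factorial : ℚ) * stirlingS2 h t * (N.choose t : ℚ)
  · refine Finset.sum_subset (Finset.range_mono (by omega)) fun t _ ht => ?_
    rw [factorial_mul_stirlingS2_of_lt (by simpa using ht), zero_mul]
  · symm
    rw [Finset.sum_congr rfl fun t _ => mul_comm (N.choose t : ℚ) _]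
    refine Finset.sum_subset (Finset.range_mono (by omega)) fun t _ ht => ?_
    rw [Nat.choose_eq_zero_of_lt (by simpa using ht)]; simp

/-! ### The MacWilliams identity -/

/-- A constant product over the support and another over its complement. -/
lemma prod_ite_zero_eq_pow_hammingNorm {F : Type*} [Field F] [DecidableEq F] {n : ℕ}
    {R : Type*} [CommMonoid R] (c : Fin n → F) (a b : R) :
    ∏ j, (if c j = 0 then a else b) = b ^ hammingNorm c * a ^ (n - hammingNorm c) := by
  have hcard := Finset.card_filter_add_card_filter_not (s := (Finset.univ : Finset (Fin n)))
    (fun j => c j = 0)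
  simp only [Finset.card_univ, Fintype.card_fin] at hcard
  have hw : hammingNorm c = (Finset.univ.filter fun j => ¬ c j = 0).card := rfl
  rw [Finset.prod_ite, Finset.prod_const, Finset.prod_const, mul_comm, hw]
  congr 2
  omega

lemma addChar_map_sum {F : Type*} [Field F] {n : ℕ} (ψ : AddChar F ℂ) (f : Fin n → F) :
    ψ (∑ i, f i) = ∏ i, ψ (f i) :=
  map_prod ψ.toMonoidHom (fun i => Multiplicative.ofAdd (f i)) Finset.univ

section MacWilliams

variable {F : Type*} [Field F] [Fintype F] [DecidableEq F] {m n : ℕ}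

lemma sum_char_dotProduct {ψ : AddChar F ℂ} (hψ : ψ.IsPrimitive) (v : Fin m → F) :
    ∑ x : Fin m → F, ψ (x ⬝ᵥ v) = if v = 0 then (Fintype.card F : ℂ) ^ m else 0 := by
  have h1 : ∀ x : Fin m → F, ψ (x ⬝ᵥ v) = ∏ i, ψ (x i * v i) := fun x => by
    rw [dotProduct, addChar_map_sum]
  simp only [h1]
  rw [← Fintype.prod_sum fun i a => ψ (a * v i)]
  simp only [AddChar.sum_mulShift _ hψ]
  split_ifs with hv
  · subst hv; simp
  · obtain ⟨i, hi⟩ := Function.ne_iff.1 hv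
    exact Finset.prod_eq_zero (Finset.mem_univ i) (by simpa using hi)

/-- The character expansion of the local weight enumerator `1 + [y ≠ 0] X`. -/
lemma card_mul_localEnumerator {ψ : AddChar F ℂ} (hψ : ψ.IsPrimitive) (y : F) :
    (Fintype.card F : ℂ[X]) * (if y = 0 then 1 else 1 + X) =
      ∑ a : F, (if a = 0 then (Fintype.card F : ℂ[X]) + ((Fintype.card F : ℂ[X]) - 1) * X
        else -X) * C (ψ (a * y)) := by
  -- The coefficient at `a` is `-X`, corrected by `q (1 + X)` at `a = 0`.
  have h1 : ∀ a : F, (if a = 0 then (Fintype.card F : ℂ[X]) + ((Fintype.card F : ℂ[X]) - 1) * X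
        else -X) * C (ψ (a * y)) =
      (if a = 0 then (Fintype.card F : ℂ[X]) * (1 + X) else 0) + -X * C (ψ (a * y)) := by
    intro a
    split_ifs with h
    · subst h; simp; ring
    · simp
  simp only [h1]
  rw [Finset.sum_add_distrib, ← Finset.mul_sum, ← map_sum, AddChar.sum_mulShift _ hψ]
  split_ifs <;> simp; ring

/-- The MacWilliams identity between the code with parity-check matrix `H` and the row space of `H`,
the words of the latter counted with multiplicity, once for each `x`. -/
lemma macWilliams_parityCheck (H : Matrix (Fin m) (Fin n) F) :
    (Fintype.card F : ℂ[X]) ^ n * ∑ x : Fin m → F, (1 + X) ^ hammingNorm (Matrix.vecMul x H) =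
      (Fintype.card F : ℂ[X]) ^ m * ∑ c : Fin n → F, if H.mulVec c = 0 then
        (-X) ^ hammingNorm c * ((Fintype.card F : ℂ[X]) + ((Fintype.card F : ℂ[X]) - 1) * X) ^
          (n - hammingNorm c) else 0 := by
  set ψ := AddChar.FiniteField.primitiveChar_to_Complex F
  have hψ : ψ.IsPrimitive := AddChar.FiniteField.primitiveChar_to_Complex_isPrimitive F
  set Q : ℂ[X] := (Fintype.card F : ℂ[X]) with hQ
  have hx : ∀ x : Fin m → F, Q ^ n * (1 + X) ^ hammingNorm (Matrix.vecMul x H) =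
      ∑ c : Fin n → F, ((-X) ^ hammingNorm c * (Q + (Q - 1) * X) ^ (n - hammingNorm c)) *
        C (ψ (x ⬝ᵥ H.mulVec c)) := by
    intro x
    have h1 : Q ^ n * (1 + X) ^ hammingNorm (Matrix.vecMul x H) =
        ∏ j, (Q * (if Matrix.vecMul x H j = 0 then 1 else 1 + X)) := by
      rw [Finset.prod_mul_distrib, prod_ite_zero_eq_pow_hammingNorm]; simp
    rw [h1]
    simp only [hQ, card_mul_localEnumerator hψ]
    rw [Fintype.prod_sum]
    refine Finset.sum_congr rfl fun c _ => ?_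
    rw [Finset.prod_mul_distrib, prod_ite_zero_eq_pow_hammingNorm, ← map_prod,
      ← addChar_map_sum, Matrix.dotProduct_mulVec, dotProduct]
    simp only [mul_comm]
  rw [Finset.mul_sum, Finset.sum_congr rfl fun x _ => hx x, Finset.sum_comm, Finset.mul_sum]
  refine Finset.sum_congr rfl fun c _ => ?_
  rw [← Finset.mul_sum, ← map_sum, sum_char_dotProduct hψ]
  split_ifs
  · simp [hQ]; ring
  · simp

lemma sum_codewords_eq_sum_weights {R : Type*} [CommSemiring R] (H : Matrix (Fin m) (Fin n) F)
    (f : ℕ → R) :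
    (∑ c : Fin n → F, if H.mulVec c = 0 then f (hammingNorm c) else 0) =
      ∑ i ∈ Finset.range (n + 1), (hammingWeightCount H i : R) * f i := by
  rw [← Finset.sum_filter, ← Finset.sum_fiberwise_of_maps_to (t := Finset.range (n + 1))
    (g := fun c : Fin n → F => hammingNorm c)]
  · refine Finset.sum_congr rfl fun i _ => ?_
    rw [Finset.sum_congr rfl (g := fun _ => f i)
      (fun c hc => by rw [(Finset.mem_filter.1 hc).2]), Finset.sum_const, nsmul_eq_mul]
    congr 2
    rw [hammingWeightCount, Nat.card_eq_fintype_card, Fintype.card_subtype, Finset.filter_filter]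
  · intro c _
    have := hammingNorm_le_card_fintype (x := c)
    simp only [Fintype.card_fin] at this
    simp only [Finset.mem_range]; omega

lemma coeff_macWilliams_term (a b : ℂ) {i t : ℕ} (hi : i ≤ n) (ht : t ≤ n) :
    ((-X : ℂ[X]) ^ i * (C a + C b * X) ^ (n - i)).coeff t =
      if i ≤ t then (-1) ^ i * b ^ (t - i) * a ^ (n - t) * ((n - i).choose (n - t) : ℂ) else 0 := by
  have h1 : (-X : ℂ[X]) ^ i * (C a + C b * X) ^ (n - i) =
      C ((-1) ^ i) * (X ^ i * (C a + C b * X) ^ (n - i)) := by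
    rw [neg_pow, map_pow, map_neg, map_one]; ring
  rw [h1, coeff_C_mul, coeff_X_pow_mul']
  split_ifs with hit
  · rw [add_comm, add_pow, finsetSum_coeff, Finset.sum_eq_single (t - i)]
    · have h2 : (C b * X : ℂ[X]) ^ (t - i) * C a ^ (n - i - (t - i)) *
          ((n - i).choose (t - i) : ℂ[X]) =
          C (b ^ (t - i) * a ^ (n - i - (t - i)) * ((n - i).choose (t - i) : ℂ)) * X ^ (t - i) := by
        simp only [map_mul, map_pow, map_natCast]; ring
      rw [h2, coeff_C_mul_X_pow, if_pos rfl,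
        ← Nat.choose_symm (show t - i ≤ n - i by omega)]
      rw [show n - i - (t - i) = n - t by omega]; ring
    · intro k _ hk
      have h2 : (C b * X : ℂ[X]) ^ k * C a ^ (n - i - k) * ((n - i).choose k : ℂ[X]) =
          C (b ^ k * a ^ (n - i - k) * ((n - i).choose k : ℂ)) * X ^ k := by
        simp only [map_mul, map_pow, map_natCast]; ring
      rw [h2, coeff_C_mul_X_pow, if_neg (Ne.symm hk)]
    · intro hk
      simp only [Finset.mem_range, not_lt] at hk
      omega
  · simp

end MacWilliams

/-! ### The simplex code -/

lemma card_sub_one_mul_length {F : Type*} [Fintype F] {m n : ℕ}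
    (hn : n = (Fintype.card F ^ m - 1) / (Fintype.card F - 1)) :
    (Fintype.card F - 1) * n = Fintype.card F ^ m - 1 := by
  rw [hn]
  exact Nat.mul_div_cancel' (by simpa using Nat.sub_dvd_pow_sub_pow (Fintype.card F) 1 m)

section Simplex

variable {F : Type*} [Field F] [Fintype F] [DecidableEq F] {m n : ℕ}

/-- Nonzero, pairwise non-proportional columns in the maximal number `(q^m - 1) / (q - 1)` meet
every line, so every nonzero vector is uniquely a nonzero multiple of a column. -/
lemma sum_eq_zero_add_sum_columns
    (hn : n = (Fintype.card F ^ m - 1) / (Fintype.card F - 1))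
    (H : Matrix (Fin m) (Fin n) F)
    (hnz : ∀ j : Fin n, (fun i => H i j) ≠ 0)
    (hlines : ∀ j k : Fin n, j ≠ k → ∀ a : F, (fun i => H i k) ≠ a • fun i => H i j)
    (f : (Fin m → F) → ℂ) :
    ∑ v, f v = f 0 + ∑ j : Fin n, ∑ a : Fˣ, f ((a : F) • fun i => H i j) := by
  let e : Fin n × Fˣ → (Fin m → F) := fun p => (p.2 : F) • fun i => H i p.1
  have hinj : Function.Injective e := by
    rintro ⟨j, a⟩ ⟨k, b⟩ hab
    simp only [e] at hab
    have hjk : j = k := by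
      by_contra hne
      apply hlines j k hne ((b : F)⁻¹ * a)
      rw [mul_smul, hab, smul_smul, inv_mul_cancel₀ b.ne_zero, one_smul]
    subst hjk
    have := smul_left_injective F (hnz j) hab
    simp only [Prod.mk.injEq, true_and]
    exact Units.ext this
  have hne : ∀ p, e p ≠ 0 := fun p => smul_ne_zero p.2.ne_zero (hnz p.1)
  have himg : Finset.univ.image e = Finset.univ.erase 0 := by
    apply Finset.eq_of_subset_of_card_le
    · intro v hv
      obtain ⟨p, _, rfl⟩ := Finset.mem_image.1 hv
      exact Finset.mem_erase.2 ⟨hne p, Finset.mem_univ _⟩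
    · rw [Finset.card_image_of_injective _ hinj, Finset.card_erase_of_mem (Finset.mem_univ _)]
      simp only [Finset.card_univ, Fintype.card_prod, Fintype.card_fin, Fintype.card_pi,
        Finset.prod_const, Fintype.card_units]
      rw [mul_comm, card_sub_one_mul_length hn]
  rw [← Finset.add_sum_erase _ _ (Finset.mem_univ 0), ← himg,
    Finset.sum_image fun _ _ _ _ hab => hinj hab, Fintype.sum_prod_type]

/-- Every nonzero word `x H` of the simplex code has weight `q^{m-1}`. -/
lemma card_mul_hammingNorm_vecMul
    (hn : n = (Fintype.card F ^ m - 1) / (Fintype.card F - 1))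
    (H : Matrix (Fin m) (Fin n) F)
    (hnz : ∀ j : Fin n, (fun i => H i j) ≠ 0)
    (hlines : ∀ j k : Fin n, j ≠ k → ∀ a : F, (fun i => H i k) ≠ a • fun i => H i j)
    {x : Fin m → F} (hx : x ≠ 0) :
    Fintype.card F * hammingNorm (Matrix.vecMul x H) = Fintype.card F ^ m := by
  set ψ := AddChar.FiniteField.primitiveChar_to_Complex F
  have hψ : ψ.IsPrimitive := AddChar.FiniteField.primitiveChar_to_Complex_isPrimitive F
  -- The vanishing character sum over all vectors, reorganised along the columns of `H`.
  have h0 := sum_char_dotProduct hψ x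
  rw [if_neg hx, sum_eq_zero_add_sum_columns hn H hnz hlines (fun v => ψ (v ⬝ᵥ x))] at h0
  have hcol : ∀ j : Fin n, ∑ a : Fˣ, ψ (((a : F) • fun i => H i j) ⬝ᵥ x) =
      ((Fintype.card F : ℂ) - 1) -
        (if Matrix.vecMul x H j = 0 then (0 : ℂ) else Fintype.card F) := by
    intro j
    have h1 : ∀ a : F, ψ ((a • fun i => H i j) ⬝ᵥ x) = ψ (a * Matrix.vecMul x H j) := by
      intro a
      rw [smul_dotProduct, smul_eq_mul, dotProduct_comm]; rfl
    simp only [h1]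
    have h2 := AddChar.sum_mulShift (Matrix.vecMul x H j) hψ
    have h3 : ∑ a : F, ψ (a * Matrix.vecMul x H j) =
        1 + ∑ a : Fˣ, ψ ((a : F) * Matrix.vecMul x H j) := by
      rw [Fintype.sum_eq_add_sum_compl (0 : F)]
      congr 1
      · simp
      · symm
        refine Finset.sum_bij (fun a _ => (a : F)) ?_ ?_ ?_ ?_
        · intro a _; simp
        · intro a _ b _ hab; exact Units.ext hab
        · intro b hb
          exact ⟨Units.mk0 b (by simpa using hb), Finset.mem_univ _, rfl⟩
        · intro a _; rfl
    rw [h3] at h2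
    split_ifs at h2 ⊢ <;> push_cast at h2 <;> linear_combination h2
  simp only [hcol] at h0
  have hw : ∑ j, (if Matrix.vecMul x H j = 0 then (0 : ℂ) else Fintype.card F) =
      Fintype.card F * hammingNorm (Matrix.vecMul x H) := by
    have : hammingNorm (Matrix.vecMul x H) =
        (Finset.univ.filter fun j => ¬ Matrix.vecMul x H j = 0).card := rfl
    rw [Finset.sum_ite, this]
    simp [mul_comm]
  rw [Finset.sum_sub_distrib, hw] at h0
  simp only [zero_dotProduct, AddChar.map_zero_eq_one, Finset.sum_const, Finset.card_univ,
    Fintype.card_fin, nsmul_eq_mul] at h0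
  have hlen : ((Fintype.card F : ℂ) - 1) * n = (Fintype.card F : ℂ) ^ m - 1 := by
    have h := card_sub_one_mul_length (F := F) (m := m) hn
    have hc : 1 ≤ Fintype.card F := Fintype.card_pos
    have := congrArg (Nat.cast : ℕ → ℂ) h
    rw [Nat.cast_mul, Nat.cast_sub hc, Nat.cast_sub (Nat.one_le_pow _ _ hc)] at this
    simpa using this
  have : (Fintype.card F : ℂ) * hammingNorm (Matrix.vecMul x H) = (Fintype.card F : ℂ) ^ m := by
    linear_combination hlen - h0
  exact_mod_cast this

/-- The coefficient of `X^t` in the MacWilliams identity of the Hamming code. -/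
lemma binomial_moment (hm : 1 < m)
    (hn : n = (Fintype.card F ^ m - 1) / (Fintype.card F - 1))
    (H : Matrix (Fin m) (Fin n) F)
    (hnz : ∀ j : Fin n, (fun i => H i j) ≠ 0)
    (hlines : ∀ j k : Fin n, j ≠ k → ∀ a : F, (fun i => H i k) ≠ a • fun i => H i j)
    {t : ℕ} (ht : t ≤ n) :
    (Fintype.card F : ℚ) ^ t * ((if t = 0 then 1 else 0) +
      ((Fintype.card F : ℚ) ^ m - 1) * ((Fintype.card F ^ (m - 1)).choose t : ℚ)) =
    (Fintype.card F : ℚ) ^ m * ∑ i ∈ Finset.range (t + 1), (hammingWeightCount H i : ℚ) *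
      ((-1) ^ i * ((Fintype.card F : ℚ) - 1) ^ (t - i) * ((n - i).choose (n - t) : ℚ)) := by
  have hq : 0 < Fintype.card F := Fintype.card_pos
  set q := Fintype.card F
  have hwt : ∀ x : Fin m → F, x ≠ 0 → hammingNorm (Matrix.vecMul x H) = q ^ (m - 1) := by
    intro x hx
    have h := card_mul_hammingNorm_vecMul hn H hnz hlines hx
    refine Nat.eq_of_mul_eq_mul_left hq (h.trans ?_)
    rw [← pow_succ']; congr 1; omega
  have hsimplex : ∑ x : Fin m → F, (1 + X : ℂ[X]) ^ hammingNorm (Matrix.vecMul x H) =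
      1 + C ((q : ℂ) ^ m - 1) * (1 + X) ^ q ^ (m - 1) := by
    rw [← Finset.add_sum_erase _ _ (Finset.mem_univ 0), Finset.sum_congr rfl
      (fun x hx => by rw [hwt x (Finset.ne_of_mem_erase hx)]), Finset.sum_const,
      Finset.card_erase_of_mem (Finset.mem_univ _), nsmul_eq_mul]
    simp [Nat.cast_sub (Nat.one_le_pow m q hq), q]
  have hmac := macWilliams_parityCheck H
  rw [hsimplex, sum_codewords_eq_sum_weights H (fun i => (-X : ℂ[X]) ^ i *
    ((Fintype.card F : ℂ[X]) + ((Fintype.card F : ℂ[X]) - 1) * X) ^ (n - i))] at hmac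
  have hco := congrArg (fun p : ℂ[X] => p.coeff t) hmac
  have hQ : ((Fintype.card F : ℕ) : ℂ[X]) = C (q : ℂ) := by simp [q]
  have hQ1 : C (q : ℂ) - 1 = C ((q : ℂ) - 1) := by simp
  simp only [hQ, hQ1, ← map_pow, coeff_C_mul, coeff_add, coeff_one_add_X_pow, coeff_one,
    finsetSum_coeff] at hco
  have hterm : ∑ i ∈ Finset.range (n + 1), ((hammingWeightCount H i : ℂ[X]) *
      ((-X : ℂ[X]) ^ i * (C (q : ℂ) + C ((q : ℂ) - 1) * X) ^ (n - i))).coeff t =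
      ∑ i ∈ Finset.range (t + 1), (hammingWeightCount H i : ℂ) *
        ((-1) ^ i * ((q : ℂ) - 1) ^ (t - i) * (q : ℂ) ^ (n - t) *
          ((n - i).choose (n - t) : ℂ)) := by
    symm
    apply Finset.sum_subset_zero_on_sdiff (Finset.range_mono (by omega))
    · intro i hi
      simp only [Finset.mem_sdiff, Finset.mem_range] at hi
      rw [← C_eq_natCast, coeff_C_mul, coeff_macWilliams_term _ _ (by omega) ht,
        if_neg (by omega), mul_zero]
    · intro i hi
      simp only [Finset.mem_range] at hi
      rw [← C_eq_natCast, coeff_C_mul, coeff_macWilliams_term _ _ (by omega) ht,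
        if_pos (by omega)]
  rw [hterm] at hco
  have hqn : (q : ℂ) ^ (n - t) ≠ 0 := pow_ne_zero _ (by exact_mod_cast hq.ne')
  have key : (q : ℂ) ^ t * ((if t = 0 then 1 else 0) +
      ((q : ℂ) ^ m - 1) * ((q ^ (m - 1)).choose t : ℂ)) =
    (q : ℂ) ^ m * ∑ i ∈ Finset.range (t + 1), (hammingWeightCount H i : ℂ) *
      ((-1) ^ i * ((q : ℂ) - 1) ^ (t - i) * ((n - i).choose (n - t) : ℂ)) := by
    apply mul_left_cancel₀ hqn
    rw [← mul_assoc, ← pow_add, Nat.sub_add_cancel ht, hco, mul_left_comm]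
    congr 1
    rw [Finset.mul_sum]
    refine Finset.sum_congr rfl fun i _ => by ring
  have key' := key
  split_ifs at key' ⊢ <;> exact_mod_cast key'

end Simplex

end Helpers

/-! ### The recursion -/

/-- **Theorem 1.** Let `q` be a prime power, `m > 1`, and `n = (q^m - 1)/(q - 1)`.
Let `{C_h}` be the weight distribution of the `q`-ary Hamming code `H(m,q)`,
realized as the code with a parity-check matrix `H` whose columns are nonzero and
pairwise non-proportional (hence representatives of the one-dimensional subspaces of
`F_q^m`).  Then for `1 ≤ h ≤ n`,
`h! C_h = (-1)^h q^{m(h-1)} (q^m - 1)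
  + ∑_{i=0}^{h-1} (-1)^{h+i+1} C_i ∑_{t=i}^{h} t! S(h,t) q^{h-t} (q-1)^{t-i} C(n-i, n-t)`. -/
theorem hamming_weight_distribution_recursion
    (F : Type*) [Field F] [Fintype F] [DecidableEq F]
    (q : ℕ) (hq : q = Fintype.card F)
    (m : ℕ) (hm : 1 < m)
    (n : ℕ) (hn : n = (q ^ m - 1) / (q - 1))
    (H : Matrix (Fin m) (Fin n) F)
    (hnz : ∀ j : Fin n, (fun i => H i j) ≠ 0)
    (hlines : ∀ j k : Fin n, j ≠ k → ∀ a : F,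
      (fun i => H i k) ≠ a • fun i => H i j)
    (C : ℕ → ℕ) (hC : ∀ h : ℕ, C h = hammingWeightCount H h)
    (h : ℕ) (h1 : 1 ≤ h) (h2 : h ≤ n) :
    (h.factorial : ℚ) * (C h : ℚ) =
      (-1 : ℚ) ^ h * (q : ℚ) ^ (m * (h - 1)) * ((q : ℚ) ^ m - 1)
      + ∑ i ∈ Finset.range h, (-1 : ℚ) ^ (h + i + 1) * (C i : ℚ) *
          ∑ t ∈ Finset.Icc i h,
            (t.factorial : ℚ) * stirlingS2 h t * (q : ℚ) ^ (h - t) *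
              ((q : ℚ) - 1) ^ (t - i) * ((n - i).choose (n - t) : ℚ) := by
  subst hq
  obtain rfl : C = hammingWeightCount H := funext hC
  have hq0 : (Fintype.card F : ℚ) ≠ 0 := by exact_mod_cast Fintype.card_ne_zero
  set q := Fintype.card F
  set B : ℕ → ℚ := fun i => ∑ t ∈ Finset.Icc i h,
    (t.factorial : ℚ) * stirlingS2 h t * (q : ℚ) ^ (h - t) *
      ((q : ℚ) - 1) ^ (t - i) * ((n - i).choose (n - t) : ℚ) with hB
  -- The left-hand side is `q^h` times the `h`-th power moment of the simplex code; the zero word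
  -- contributes nothing because `S(h,0) = 0`.
  have hmoment : (q : ℚ) ^ (m * h) * ((q : ℚ) ^ m - 1) =
      (q : ℚ) ^ m * ∑ i ∈ Finset.range (h + 1), (-1) ^ i * (hammingWeightCount H i : ℚ) * B i := by
    have hL : (q : ℚ) ^ (m * h) * ((q : ℚ) ^ m - 1) = ∑ t ∈ Finset.range (h + 1),
        (t.factorial : ℚ) * stirlingS2 h t * (q : ℚ) ^ (h - t) * ((q : ℚ) ^ t *
          ((if t = 0 then 1 else 0) + ((q : ℚ) ^ m - 1) * ((q ^ (m - 1)).choose t : ℚ))) := by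
      have hpow : (q : ℚ) ^ (m * h) = (q : ℚ) ^ h * ((q ^ (m - 1) : ℕ) : ℚ) ^ h := by
        rw [Nat.cast_pow, ← mul_pow, ← pow_succ', Nat.sub_add_cancel hm.le, pow_mul]
      rw [hpow, ← sum_stirlingS2_mul_choose h (q ^ (m - 1)), Finset.mul_sum, Finset.sum_mul]
      refine Finset.sum_congr rfl fun t ht => ?_
      have hqt : (q : ℚ) ^ h = (q : ℚ) ^ (h - t) * (q : ℚ) ^ t := by
        rw [← pow_add, Nat.sub_add_cancel (by simp at ht; omega)]
      split_ifs with h0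
      · subst h0; simp [stirlingS2_zero_right h1]
      · rw [hqt]; ring
    rw [hL, Finset.sum_congr rfl fun t ht => by
      rw [binomial_moment hm hn H hnz hlines (show t ≤ n by simp at ht; omega)]]
    simp only [hB, Finset.mul_sum]
    rw [Finset.sum_comm' (t' := Finset.range (h + 1)) (s' := fun i => Finset.Icc i h)
      (fun t i => by simp only [Finset.mem_range, Finset.mem_Icc]; omega)]
    refine Finset.sum_congr rfl fun i _ => Finset.sum_congr rfl fun t _ => by ring
  have hBh : B h = h.factorial := by
    simp [hB, factorial_mul_stirlingS2_self]
  have hred : (q : ℚ) ^ (m * (h - 1)) * ((q : ℚ) ^ m - 1) =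
      ∑ i ∈ Finset.range (h + 1), (-1) ^ i * (hammingWeightCount H i : ℚ) * B i := by
    apply mul_left_cancel₀ (pow_ne_zero m hq0)
    rw [← hmoment, ← mul_assoc, ← pow_add]
    congr 2
    obtain ⟨k, rfl⟩ := Nat.exists_eq_add_of_le h1
    rw [Nat.add_sub_cancel_left]; ring
  rw [Finset.sum_range_succ, hBh] at hred
  have hsum : ∑ i ∈ Finset.range h, (-1 : ℚ) ^ (h + i + 1) * (hammingWeightCount H i : ℚ) * B i =
      -(-1) ^ h * ∑ i ∈ Finset.range h, (-1) ^ i * (hammingWeightCount H i : ℚ) * B i := by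
    rw [Finset.mul_sum]
    refine Finset.sum_congr rfl fun i _ => by ring
  rw [hsum]
  have hsign : (-1 : ℚ) ^ h * (-1) ^ h = 1 := by rw [← mul_pow]; simp
  linear_combination (-(-1) ^ h) * hred - (hammingWeightCount H h : ℚ) * h.factorial * hsign
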